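/- arXiv:1111.0986 — 2 statements merged into one kernel-verified Lean document; each statement's English description precedes it below -/
import Mathlib

section
/- For every ℓ ≥ 2, the number of 321-avoiding alternating (up-down) permutations of length 2ℓ is the Catalan number C_{ℓ+1}. -/
/-- `w` is an alternating (up-down) permutation: `w 0 < w 1 > w 2 < ⋯`. -/
def UpDown {n : ℕ} (w : Equiv.Perm (Fin n)) : Prop :=
  ∀ i : ℕ, ∀ h : i + 1 < n,
    if i % 2 = 0 then w ⟨i, Nat.lt_of_succ_lt h⟩ < w ⟨i + 1, h⟩
    else w ⟨i + 1, h⟩ < w ⟨i, Nat.lt_of_succ_lt h⟩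

/-- `w` is a reverse-alternating (down-up) permutation: `w 0 > w 1 < w 2 > ⋯`. -/
def DownUp {n : ℕ} (w : Equiv.Perm (Fin n)) : Prop :=
  ∀ i : ℕ, ∀ h : i + 1 < n,
    if i % 2 = 0 then w ⟨i + 1, h⟩ < w ⟨i, Nat.lt_of_succ_lt h⟩
    else w ⟨i, Nat.lt_of_succ_lt h⟩ < w ⟨i + 1, h⟩

/-- The set of occurrences of the pattern 321 in `w`. -/
def occ321 {n : ℕ} (w : Equiv.Perm (Fin n)) : Set (Fin n × Fin n × Fin n) :=
  {t | t.1 < t.2.1 ∧ t.2.1 < t.2.2 ∧ w t.2.2 < w t.2.1 ∧ w t.2.1 < w t.1}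

/-- The set of occurrences of the pattern 123 in `w`. -/
def occ123 {n : ℕ} (w : Equiv.Perm (Fin n)) : Set (Fin n × Fin n × Fin n) :=
  {t | t.1 < t.2.1 ∧ t.2.1 < t.2.2 ∧ w t.1 < w t.2.1 ∧ w t.2.1 < w t.2.2}

/-!
Let `w` be alternating and 321-avoiding, with positions counted from `0`. Each descent
`w (2i + 1) > w (2i + 2)` forces everything before it to lie below its top and everything after it
to lie above its bottom. So `w` increases along the `l` positions `2, 4, …, 2l - 2, 2l - 1` and
along the `l` positions `0, 1, 3, …, 2l - 3`. Written as two rows, the second one starting a column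
further left, the values of `w` form a standard Young tableau of skew shape `(l + 1, l) / (1)`, the
column conditions being the descents of `w`; every such tableau arises.

Reading off the row of `0, 1, 2, …` turns these tableaux into sequences of `l` letters `U` and `l`
letters `D` in which each prefix has at most one more `D` than `U`. Putting a `U` in front and a `D`
at the end gives exactly the Dyck words of semilength `l + 1`.
-/

open DyckStep Finset

section BallotSequences

/-- A ballot sequence with `m` votes for `U` and `n` votes for `D`, in which `U` has a head start
of `r` votes and is never behind. -/
structure IsBallotSeq (r m n : ℕ) (L : List DyckStep) : Prop where
  count_U : L.count U = m
  count_D : L.count D = n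
  count_D_take_le : ∀ k, (L.take k).count D ≤ (L.take k).count U + r

variable {r m n : ℕ} {L : List DyckStep}

theorem count_U_add_count_D (L : List DyckStep) : L.count U + L.count D = L.length := by
  induction L with
  | nil => rfl
  | cons a L ih => cases a <;> grind

theorem isBallotSeq_cons_U_iff : IsBallotSeq r (m + 1) n (U :: L) ↔ IsBallotSeq (r + 1) m n L := by
  constructor
  · rintro ⟨hU, hD, hle⟩
    refine ⟨by simpa using hU, by simpa using hD, fun k => ?_⟩
    have := hle (k + 1)
    simp only [List.take_succ_cons, List.count_cons_self, List.count_cons_of_ne, ne_eq,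
      reduceCtorEq, not_false_eq_true] at this
    omega
  · rintro ⟨hU, hD, hle⟩
    refine ⟨by simpa using hU, by simpa using hD, fun k => ?_⟩
    cases k with
    | zero => simp
    | succ k =>
      have := hle k
      simp only [List.take_succ_cons, List.count_cons_self, List.count_cons_of_ne, ne_eq,
        reduceCtorEq, not_false_eq_true]
      omega

theorem isBallotSeq_concat_D_iff (hn : n + 1 ≤ m + r) :
    IsBallotSeq r m (n + 1) (L ++ [D]) ↔ IsBallotSeq r m n L := by
  constructor
  · rintro ⟨hU, hD, hle⟩
    replace hU : L.count U = m := by simpa using hU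
    replace hD : L.count D = n := by simpa using hD
    refine ⟨hU, hD, fun k => ?_⟩
    rcases le_total k L.length with hk | hk
    · simpa [List.take_append_of_le_length hk] using hle k
    · rw [List.take_of_length_le hk]
      omega
  · rintro ⟨hU, hD, hle⟩
    refine ⟨by simpa using hU, by simpa using hD, fun k => ?_⟩
    rcases le_or_gt k L.length with hk | hk
    · simpa [List.take_append_of_le_length hk] using hle k
    · rw [List.take_of_length_le (by simpa using hk)]
      simpa [hU, hD] using hn

theorem isBallotSeq_dyckWord (p : DyckWord) : IsBallotSeq 0 p.semilength p.semilength p.toList :=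
  ⟨rfl, p.semilength_eq_count_D.symm, p.count_D_le_count_U⟩

/-- The Dyck word whose list of steps is a given ballot sequence without head start and with
equally many votes on both sides. -/
def dyckWordOfBallotSeq (h : IsBallotSeq 0 n n L) : DyckWord where
  toList := L
  count_U_eq_count_D := h.count_U.trans h.count_D.symm
  count_D_le_count_U := h.count_D_take_le

theorem isBallotSeq_nest_iff :
    IsBallotSeq 0 (n + 1) (n + 1) (U :: L ++ [D]) ↔ IsBallotSeq 1 n n L := by
  rw [List.cons_append, isBallotSeq_cons_U_iff, isBallotSeq_concat_D_iff le_rfl]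

theorem card_isBallotSeq_one (n : ℕ) :
    Nat.card {L // IsBallotSeq 1 n n L} = catalan (n + 1) := by
  let nest (L : {L // IsBallotSeq 1 n n L}) : {p : DyckWord // p.semilength = n + 1} :=
    ⟨dyckWordOfBallotSeq (isBallotSeq_nest_iff.2 L.2), (isBallotSeq_nest_iff.2 L.2).count_U⟩
  have nest_injective : Function.Injective nest := fun L L' h => by
    have hnest : U :: L.1 ++ [D] = U :: L'.1 ++ [D] := congrArg (fun p => p.1.toList) h
    exact Subtype.ext (by simpa using hnest)
  have nest_surjective : Function.Surjective nest := by
    rintro ⟨p, hp⟩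
    have hp0 : p ≠ 0 := by
      rintro rfl
      simp at hp
    have hcons := DyckWord.cons_tail_dropLast_concat hp0
    have hinner : IsBallotSeq 1 n n p.toList.dropLast.tail := by
      rw [← isBallotSeq_nest_iff, hcons, ← hp]
      exact isBallotSeq_dyckWord p
    exact ⟨⟨_, hinner⟩, Subtype.ext (DyckWord.ext hcons)⟩
  rw [Nat.card_eq_of_bijective nest ⟨nest_injective, nest_surjective⟩, Nat.card_eq_fintype_card,
    DyckWord.card_dyckWord_semilength_eq_catalan]

end BallotSequences

section CountingBelow

variable {α : Type*} [LinearOrder α] {m n r : ℕ} {u v : Fin m → α} {d : Fin n → α}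

theorem eq_of_card_filter_lt_eq (hu : Monotone u) (hv : Monotone v)
    (h : ∀ a, #{i | u i < a} = #{i | v i < a}) : u = v := by
  funext i
  refine eq_of_forall_gt_iff fun a => ?_
  rw [← Tuple.lt_card_lt_iff_apply_lt_of_monotone hu, h,
    Tuple.lt_card_lt_iff_apply_lt_of_monotone hv]

theorem forall_le_shift_iff_card_filter_lt_le (hu : Monotone u) (hd : Monotone d)
    (hn : n ≤ m + r) :
    (∀ (i : Fin m) (j : Fin n), (j : ℕ) = i + r → u i ≤ d j) ↔
      ∀ a, #{j | d j < a} ≤ #{i | u i < a} + r := by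
  constructor
  · intro h a
    by_contra! hlt
    have hle : #{j | d j < a} ≤ n := by simpa using card_filter_le univ (d · < a)
    let i : Fin m := ⟨#{i | u i < a}, by omega⟩
    let j : Fin n := ⟨#{i | u i < a} + r, by omega⟩
    have hi : ¬ u i < a := fun hi =>
      lt_irrefl _ ((Tuple.lt_card_lt_iff_apply_lt_of_monotone hu).2 hi)
    have hj : d j < a := (Tuple.lt_card_lt_iff_apply_lt_of_monotone hd).1 hlt
    exact hi ((h i j rfl).trans_lt hj)
  · intro h i j hij
    by_contra! hlt
    have hj : j < #{j | d j < u i} := (Tuple.lt_card_lt_iff_apply_lt_of_monotone hd).2 hlt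
    have hi : ¬ i < #{k | u k < u i} := fun hi =>
      lt_irrefl _ ((Tuple.lt_card_lt_iff_apply_lt_of_monotone hu).1 hi)
    have := h (u i)
    omega

end CountingBelow

theorem count_take_ofFn {α : Type*} [DecidableEq α] {n : ℕ} (c : Fin n → α) (a : α) (k : ℕ) :
    ((List.ofFn c).take k).count a = #{v : Fin n | v < k ∧ c v = a} := by
  induction n generalizing k with
  | zero => simp
  | succ n ih =>
    cases k with
    | zero => simp
    | succ k =>
      simp [List.count_cons, ih, Fin.card_filter_univ_succ', add_comm]

section SkewTableaux

variable {m n N r : ℕ} {f g : Fin m ⊕ Fin n ≃ Fin N}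

/-- The filling `f` is a standard Young tableau of the two-row skew shape `(m + r, n) / (r)`.
The cells of the first row are `Sum.inl i`, in column `i + r`; those of the second row are
`Sum.inr j`, in column `j`. Entries start from `0`. -/
structure IsSkewTableau (r : ℕ) (f : Fin m ⊕ Fin n ≃ Fin N) : Prop where
  strictMono_inl : StrictMono fun i => f (Sum.inl i)
  strictMono_inr : StrictMono fun j => f (Sum.inr j)
  inl_lt_inr : ∀ (i : Fin m) (j : Fin n), (j : ℕ) = i + r → f (Sum.inl i) < f (Sum.inr j)

/-- The row reading of a two-row filling: the letter at position `v` is `U` or `D` according to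
whether the entry `v` lies in the first or the second row. -/
def rowWord (f : Fin m ⊕ Fin n ≃ Fin N) : List DyckStep :=
  List.ofFn fun v => (f.symm v).elim (fun _ => U) (fun _ => D)

theorem count_U_take_rowWord (f : Fin m ⊕ Fin n ≃ Fin N) (k : ℕ) :
    ((rowWord f).take k).count U = #{i | (f (Sum.inl i) : ℕ) < k} := by
  rw [rowWord, count_take_ofFn, card_filter, ← f.sum_comp, Fintype.sum_sum_type]
  simp

theorem count_D_take_rowWord (f : Fin m ⊕ Fin n ≃ Fin N) (k : ℕ) :
    ((rowWord f).take k).count D = #{j | (f (Sum.inr j) : ℕ) < k} := by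
  rw [rowWord, count_take_ofFn, card_filter, ← f.sum_comp, Fintype.sum_sum_type]
  simp

theorem count_U_rowWord (f : Fin m ⊕ Fin n ≃ Fin N) : (rowWord f).count U = m := by
  have h := count_U_take_rowWord f N
  rw [List.take_of_length_le (by simp [rowWord])] at h
  simpa using h

theorem count_D_rowWord (f : Fin m ⊕ Fin n ≃ Fin N) : (rowWord f).count D = n := by
  have h := count_D_take_rowWord f N
  rw [List.take_of_length_le (by simp [rowWord])] at h
  simpa using h

theorem isSkewTableau_iff_isBallotSeq_rowWord (hn : n ≤ m + r)
    (hinl : StrictMono fun i => f (Sum.inl i)) (hinr : StrictMono fun j => f (Sum.inr j)) :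
    IsSkewTableau r f ↔ IsBallotSeq r m n (rowWord f) := by
  have hcolumn := forall_le_shift_iff_card_filter_lt_le (u := fun i => (f (Sum.inl i) : ℕ))
    (d := fun j => (f (Sum.inr j) : ℕ)) (fun _ _ h => hinl.monotone h)
    (fun _ _ h => hinr.monotone h) hn
  simp only [← count_U_take_rowWord, ← count_D_take_rowWord] at hcolumn
  have hne (i : Fin m) (j : Fin n) : f (Sum.inl i) ≠ f (Sum.inr j) := by simp
  constructor
  · intro h
    exact ⟨count_U_rowWord f, count_D_rowWord f,
      hcolumn.1 fun i j hij => (h.inl_lt_inr i j hij).le⟩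
  · intro h
    exact ⟨hinl, hinr, fun i j hij =>
      lt_of_le_of_ne (hcolumn.2 h.count_D_take_le i j hij) (hne i j)⟩

theorem IsSkewTableau.eq_of_rowWord_eq (hf : IsSkewTableau r f) (hg : IsSkewTableau r g)
    (h : rowWord f = rowWord g) : f = g := by
  have hinl : (fun i => (f (Sum.inl i) : ℕ)) = fun i => (g (Sum.inl i) : ℕ) :=
    eq_of_card_filter_lt_eq (fun _ _ h => hf.strictMono_inl.monotone h)
      (fun _ _ h => hg.strictMono_inl.monotone h) fun k => by
        rw [← count_U_take_rowWord, h, count_U_take_rowWord]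
  have hinr : (fun j => (f (Sum.inr j) : ℕ)) = fun j => (g (Sum.inr j) : ℕ) :=
    eq_of_card_filter_lt_eq (fun _ _ h => hf.strictMono_inr.monotone h)
      (fun _ _ h => hg.strictMono_inr.monotone h) fun k => by
        rw [← count_D_take_rowWord, h, count_D_take_rowWord]
  ext (i | j)
  · exact congrFun hinl i
  · exact congrFun hinr j

theorem exists_strictMono_rowWord_eq {L : List DyckStep} (hU : L.count U = m)
    (hD : L.count D = n) (hN : m + n = N) :
    ∃ f : Fin m ⊕ Fin n ≃ Fin N, StrictMono (fun i => f (Sum.inl i)) ∧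
      StrictMono (fun j => f (Sum.inr j)) ∧ rowWord f = L := by
  obtain rfl : L.length = N := by rw [← count_U_add_count_D, hU, hD, hN]
  let s : Finset (Fin L.length) := {v | L.get v = U}
  have hs : #s = m := by
    simpa [s, hU] using (count_take_ofFn L.get U L.length).symm
  have hsc : #sᶜ = n := by
    rw [card_compl, Fintype.card_fin, hs]
    omega
  refine ⟨finSumEquivOfFinset hs hsc, (s.orderEmbOfFin hs).strictMono,
    (sᶜ.orderEmbOfFin hsc).strictMono, ?_⟩
  rw [rowWord]
  conv_rhs => rw [← List.ofFn_get L]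
  congr 1
  funext v
  obtain ⟨x, rfl⟩ := (finSumEquivOfFinset hs hsc).surjective v
  rw [Equiv.symm_apply_apply]
  rcases x with i | j
  · have hi : s.orderEmbOfFin hs i ∈ s := orderEmbOfFin_mem s hs i
    exact (mem_filter.1 hi).2.symm
  · have hj : sᶜ.orderEmbOfFin hsc j ∉ s := mem_compl.1 (orderEmbOfFin_mem sᶜ hsc j)
    exact ((dichotomy _).resolve_left fun hU => hj (mem_filter.2 ⟨mem_univ _, hU⟩)).symm

theorem card_isSkewTableau_eq_card_isBallotSeq (hn : n ≤ m + r) (hN : m + n = N) :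
    Nat.card {f : Fin m ⊕ Fin n ≃ Fin N // IsSkewTableau r f} =
      Nat.card {L // IsBallotSeq r m n L} := by
  refine Nat.card_eq_of_bijective (fun f => ⟨rowWord f.1,
    (isSkewTableau_iff_isBallotSeq_rowWord hn f.2.strictMono_inl f.2.strictMono_inr).1 f.2⟩)
    ⟨fun f g h => ?_, fun ⟨L, hL⟩ => ?_⟩
  · exact Subtype.ext (f.2.eq_of_rowWord_eq g.2 (congrArg Subtype.val h))
  · obtain ⟨f, hinl, hinr, rfl⟩ := exists_strictMono_rowWord_eq hL.count_U hL.count_D hN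
    exact ⟨⟨f, (isSkewTableau_iff_isBallotSeq_rowWord hn hinl hinr).2 hL⟩, rfl⟩

end SkewTableaux

section Permutations

variable {n l r : ℕ}

theorem upDown_iff {w : Equiv.Perm (Fin n)} :
    UpDown w ↔ ∀ p q : Fin n, (q : ℕ) = p + 1 →
      (Even (p : ℕ) → w p < w q) ∧ (Odd (p : ℕ) → w q < w p) := by
  simp only [Nat.even_iff, Nat.odd_iff]
  constructor
  · rintro h ⟨p, hp⟩ ⟨q, hq⟩ rfl
    have := h p hq
    split_ifs at this with heven
    · exact ⟨fun _ => this, fun hodd => absurd heven (Nat.mod_two_ne_zero.2 hodd)⟩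
    · exact ⟨fun heven' => absurd heven' heven, fun _ => this⟩
  · intro h p hp
    split_ifs with heven
    · exact (h _ _ rfl).1 heven
    · exact (h _ _ rfl).2 (Nat.mod_two_ne_zero.1 heven)

theorem occ321_eq_empty_iff {w : Equiv.Perm (Fin n)} :
    occ321 w = ∅ ↔ ∀ p q r, p < q → q < r → w q < w p → w q < w r := by
  simp only [Set.eq_empty_iff_forall_notMem, occ321, Set.mem_ofPred_eq, Prod.forall]
  refine forall₃_congr fun p q r => ⟨fun h hpq hqr hw => ?_, fun h ⟨hpq, hqr, hrq, hqp⟩ => ?_⟩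
  · exact lt_of_le_of_ne (not_lt.1 fun hrq => h ⟨hpq, hqr, hrq, hw⟩) (w.injective.ne hqr.ne)
  · exact lt_asymm hrq (h hpq hqr hqp)

theorem lt_of_descent_left {w : Equiv.Perm (Fin n)} (hw : occ321 w = ∅) {p q r : Fin n}
    (hpq : p < q) (hqr : q < r) (hqp : w q < w p) : w q < w r :=
  occ321_eq_empty_iff.1 hw p q r hpq hqr hqp

theorem lt_of_descent_right {w : Equiv.Perm (Fin n)} (hw : occ321 w = ∅) {p q r : Fin n}
    (hpq : p < q) (hqr : q < r) (hrq : w r < w q) : w p < w q :=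
  lt_of_le_of_ne (not_lt.1 fun hqp => lt_asymm hrq (lt_of_descent_left hw hpq hqr hqp))
    (w.injective.ne hpq.ne)

theorem occ321_eq_empty_of_colouring {w : Equiv.Perm (Fin n)} (c : Fin n → Bool)
    (h : ∀ p q, c p = c q → p < q → w p < w q) : occ321 w = ∅ := by
  refine occ321_eq_empty_iff.2 fun p q r hpq hqr hqp => ?_
  by_cases hcqr : c q = c r
  · exact h q r hcqr hqr
  · have hcpq : c p ≠ c q := fun hc => lt_asymm hqp (h p q hc hpq)
    have hcpr : c p = c r := (Bool.eq_not.2 hcpq).trans (Bool.eq_not.2 (Ne.symm hcqr)).symm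
    exact hqp.trans (h p r hcpr (hpq.trans hqr))

/-- The positions of a word of length `2 * l` arranged in two rows of length `l`, the first one
being `2, 4, …, 2 * l - 2, 2 * l - 1` and the second one `0, 1, 3, …, 2 * l - 3`; the last entry of
the first row comes from the minimum, the first entry of the second one from truncated
subtraction. -/
def cellPosition (l : ℕ) : Fin l ⊕ Fin l → Fin (2 * l)
  | Sum.inl i => ⟨min (2 * i + 2) (2 * l - 1), by omega⟩
  | Sum.inr j => ⟨2 * j - 1, by omega⟩

theorem cellPosition_bijective (l : ℕ) : Function.Bijective (cellPosition l) := by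
  rw [Fintype.bijective_iff_injective_and_card]
  constructor
  · rintro (i | i) (j | j) hij <;> grind [cellPosition]
  · simp [two_mul]

/-- `cellPosition` as an equivalence between cells and positions. -/
noncomputable def cellEquiv (l : ℕ) : Fin l ⊕ Fin l ≃ Fin (2 * l) :=
  Equiv.ofBijective (cellPosition l) (cellPosition_bijective l)

theorem val_cellEquiv_inl (i : Fin l) :
    (cellEquiv l (Sum.inl i) : ℕ) = min (2 * (i : ℕ) + 2) (2 * l - 1) := rfl

theorem val_cellEquiv_inr (j : Fin l) : (cellEquiv l (Sum.inr j) : ℕ) = 2 * (j : ℕ) - 1 := rfl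

variable {w : Equiv.Perm (Fin (2 * l))}

theorem UpDown.isSkewTableau (hw : UpDown w) (h321 : occ321 w = ∅) :
    IsSkewTableau 1 ((cellEquiv l).trans w) := by
  have descent (p q : Fin (2 * l)) (hq : (q : ℕ) = p + 1) (hp : Odd (p : ℕ)) : w q < w p :=
    (upDown_iff.1 hw p q hq).2 hp
  refine ⟨fun i j hij => ?_, fun i j hij => ?_, fun i j hij => ?_⟩
  · have hi := val_cellEquiv_inl i
    have hj := val_cellEquiv_inl j
    let top : Fin (2 * l) := ⟨2 * i + 1, by omega⟩
    have htop : w (cellEquiv l (Sum.inl i)) < w top :=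
      descent top _ (by simp only [top]; omega) ⟨i, rfl⟩
    exact lt_of_descent_left h321 (Fin.lt_def.2 (by simp only [top]; omega))
      (Fin.lt_def.2 (by omega)) htop
  · have hi := val_cellEquiv_inr i
    have hj := val_cellEquiv_inr j
    let bottom : Fin (2 * l) := ⟨2 * j, by omega⟩
    have hbottom : w bottom < w (cellEquiv l (Sum.inr j)) :=
      descent _ bottom (by simp only [bottom]; omega) ⟨j - 1, by omega⟩
    exact lt_of_descent_right h321 (Fin.lt_def.2 (by omega))
      (Fin.lt_def.2 (by simp only [bottom]; omega)) hbottom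
  · have hi := val_cellEquiv_inl i
    have hj := val_cellEquiv_inr j
    exact descent _ _ (by omega) ⟨i, by omega⟩

theorem IsSkewTableau.upDown (hl : 2 ≤ l) (h : IsSkewTableau 1 ((cellEquiv l).trans w)) :
    UpDown w := by
  obtain ⟨hinl, hinr, hcolumn⟩ := h
  refine upDown_iff.2 fun p q hpq => ?_
  obtain ⟨x, rfl⟩ := (cellEquiv l).surjective p
  obtain ⟨y, rfl⟩ := (cellEquiv l).surjective q
  rcases x with i | i <;> rcases y with j | j <;>
    simp only [val_cellEquiv_inl, val_cellEquiv_inr, Nat.even_iff, Nat.odd_iff] at hpq ⊢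
  · exact ⟨fun _ => hinl (Fin.lt_def.2 (by omega)), fun _ => by omega⟩
  · have ascent : w (cellEquiv l (Sum.inl i)) < w (cellEquiv l (Sum.inr j)) :=
      (hcolumn i ⟨i + 1, by omega⟩ rfl).trans (hinr (Fin.lt_def.2 (by grind)))
    exact ⟨fun _ => ascent, fun _ => by omega⟩
  · exact ⟨fun _ => by omega, fun _ => hcolumn j i (by omega)⟩
  · exact ⟨fun _ => hinr (Fin.lt_def.2 (by omega)), fun _ => by omega⟩

theorem IsSkewTableau.occ321_eq_empty (h : IsSkewTableau r ((cellEquiv l).trans w)) :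
    occ321 w = ∅ := by
  refine occ321_eq_empty_of_colouring (fun p => ((cellEquiv l).symm p).isLeft) fun p q hc hpq => ?_
  obtain ⟨x, rfl⟩ := (cellEquiv l).surjective p
  obtain ⟨y, rfl⟩ := (cellEquiv l).surjective q
  simp only [Equiv.symm_apply_apply] at hc
  rw [Fin.lt_def] at hpq
  rcases x with i | i <;> rcases y with j | j <;>
    simp only [val_cellEquiv_inl, val_cellEquiv_inr, Sum.isLeft_inl, Sum.isLeft_inr,
      reduceCtorEq] at hc hpq
  · exact h.strictMono_inl (Fin.lt_def.2 (by omega))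
  · exact h.strictMono_inr (Fin.lt_def.2 (by omega))

end Permutations

theorem stmt3 (l : ℕ) (hl : 2 ≤ l) :
    Nat.card {w : Equiv.Perm (Fin (2 * l)) // UpDown w ∧ occ321 w = ∅} = catalan (l + 1) := by
  have hcell (w : Equiv.Perm (Fin (2 * l))) :
      UpDown w ∧ occ321 w = ∅ ↔ IsSkewTableau 1 ((cellEquiv l).trans w) :=
    ⟨fun h => h.1.isSkewTableau h.2, fun h => ⟨h.upDown hl, h.occ321_eq_empty⟩⟩
  calc Nat.card {w : Equiv.Perm (Fin (2 * l)) // UpDown w ∧ occ321 w = ∅}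
      = Nat.card {f : Fin l ⊕ Fin l ≃ Fin (2 * l) // IsSkewTableau 1 f} :=
        Nat.card_congr <| ((cellEquiv l).symm.equivCongr (Equiv.refl _)).subtypeEquiv hcell
    _ = Nat.card {L // IsBallotSeq 1 l l L} :=
        card_isSkewTableau_eq_card_isBallotSeq (Nat.le_succ l) (two_mul l).symm
    _ = catalan (l + 1) := card_isBallotSeq_one l
end

section
/- For every ℓ ≥ 2, the number of 321-avoiding alternating (up-down) permutations of length 2ℓ that end in their largest entry (i.e., w_{2ℓ} = 2ℓ) is the Catalan number C_ℓ. -/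
/-!
Mark the values `0, …, 2l - 2` of such a permutation `w` by `U` if they sit in a valley (an even
position other than `0`) and by `D` otherwise, and prepend one more `U`. Avoiding 321 forces the
valleys to increase and the remaining entries to increase, and each valley lies below the peak on
its left. These conditions describe a standard tableau with two rows, so the word is a Dyck word of
semilength `l`. Conversely the word determines `w`: the `k`-th `U` is the valley in position `2k`
and the `k`-th `D` is the peak in position `2k - 1`.
-/

open Finset

theorem count_add_count_not (p : ℕ → Prop) [DecidablePred p] (n : ℕ) :
    Nat.count p n + Nat.count (¬ p ·) n = n := by
  induction n with
  | zero => rfl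
  | succ n ih => grind

theorem eqOn_of_strictMonoOn_of_image_eq {α β : Type*} [LinearOrder α] [WellFoundedLT α]
    [Preorder β] {f g : α → β} {s : Set α} (hf : StrictMonoOn f s) (hg : StrictMonoOn g s)
    (h : f '' s = g '' s) : Set.EqOn f g s := by
  rw [← Set.range_domRestrict, ← Set.range_domRestrict] at h
  exact Set.domRestrict_eq_domRestrict_iff.mp ((hf.domRestrict.range_inj hg.domRestrict).mp h)

section BallotSet

/-- The sets of positions of the up-steps in the Dyck words of semilength `n`. -/
structure IsBallotSet (n : ℕ) (S : Finset ℕ) : Prop where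
  subset_range : S ⊆ range (2 * n)
  count_mem_eq : Nat.count (· ∈ S) (2 * n) = n
  count_notMem_le_count_mem : ∀ i ≤ 2 * n, Nat.count (· ∉ S) i ≤ Nat.count (· ∈ S) i

/-- The word of length `n` with up-steps at the positions in `S` and down-steps elsewhere. -/
def stepWord (S : Finset ℕ) (n : ℕ) : List DyckStep :=
  (List.range n).map fun x => if x ∈ S then .U else .D

/-- The set of positions of the up-steps in a word. -/
def upSteps (w : List DyckStep) : Finset ℕ :=
  {x ∈ range w.length | w[x]? = some .U}

variable {S : Finset ℕ} {n : ℕ}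

theorem length_stepWord : (stepWord S n).length = n := by
  simp [stepWord]

theorem take_stepWord (i : ℕ) : (stepWord S n).take i = stepWord S (min i n) := by
  rw [stepWord, ← List.map_take, List.take_range, stepWord]

theorem count_U_stepWord : (stepWord S n).count .U = Nat.count (· ∈ S) n := by
  induction n with
  | zero => rfl
  | succ n ih => grind [stepWord, List.range_succ]

theorem count_D_stepWord : (stepWord S n).count .D = Nat.count (· ∉ S) n := by
  induction n with
  | zero => rfl
  | succ n ih => grind [stepWord, List.range_succ]

theorem upSteps_stepWord (hS : S ⊆ range n) : upSteps (stepWord S n) = S := by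
  ext x
  have hx : x ∈ S → x ∈ range n := @hS x
  grind [upSteps, stepWord]

theorem stepWord_upSteps (w : List DyckStep) : stepWord (upSteps w) w.length = w := by
  refine List.ext_getElem length_stepWord fun i _ hi => ?_
  rcases w[i].dichotomy with hU | hD <;> simp [stepWord, upSteps, *]

/-- The Dyck word with up-steps at the positions in a ballot set. -/
def IsBallotSet.toDyckWord (hS : IsBallotSet n S) : DyckWord where
  toList := stepWord S (2 * n)
  count_U_eq_count_D := by
    have htotal := count_add_count_not (· ∈ S) (2 * n)
    have hmem := hS.count_mem_eq
    rw [count_U_stepWord, count_D_stepWord]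
    omega
  count_D_le_count_U i := by
    rw [take_stepWord, count_U_stepWord, count_D_stepWord]
    exact hS.count_notMem_le_count_mem _ (min_le_right _ _)

theorem IsBallotSet.semilength_toDyckWord (hS : IsBallotSet n S) :
    hS.toDyckWord.semilength = n :=
  count_U_stepWord.trans hS.count_mem_eq

theorem isBallotSet_upSteps {p : DyckWord} (hp : p.semilength = n) :
    IsBallotSet n (upSteps p.toList) := by
  subst hp
  have take_eq (i : ℕ) (hi : i ≤ p.toList.length) :
      stepWord (upSteps p.toList) i = p.toList.take i := by
    conv_rhs => rw [← stepWord_upSteps p.toList, take_stepWord, min_eq_left hi]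
  refine ⟨?_, ?_, fun i hi => ?_⟩ <;> rw [p.two_mul_semilength_eq_length] at *
  · exact filter_subset _ _
  · rw [← count_U_stepWord, stepWord_upSteps, DyckWord.semilength]
  · rw [← count_U_stepWord, ← count_D_stepWord, take_eq i hi]
    exact p.count_D_le_count_U i

/-- The correspondence between Dyck words and ballot sets, which reduces the enumeration of the
latter to the one of Dyck words. -/
def ballotSetEquivDyckWord (n : ℕ) :
    {S // IsBallotSet n S} ≃ {p : DyckWord // p.semilength = n} where
  toFun S := ⟨S.2.toDyckWord, S.2.semilength_toDyckWord⟩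
  invFun p := ⟨upSteps p.1.toList, isBallotSet_upSteps p.2⟩
  left_inv S := Subtype.ext (upSteps_stepWord S.2.subset_range)
  right_inv p := by
    refine Subtype.ext (DyckWord.ext ?_)
    obtain ⟨p, rfl⟩ := p
    simp only [IsBallotSet.toDyckWord, p.two_mul_semilength_eq_length, stepWord_upSteps]

theorem card_isBallotSet (n : ℕ) : Nat.card {S // IsBallotSet n S} = catalan n := by
  rw [Nat.card_congr (ballotSetEquivDyckWord n), Nat.card_eq_fintype_card,
    DyckWord.card_dyckWord_semilength_eq_catalan]

end BallotSet

section Tableau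

variable {n : ℕ}

/-- The even positions other than `0`, which are the interior valleys of an up-down permutation. -/
def valleys (n : ℕ) : Finset (Fin n) :=
  {i | (i : ℕ) % 2 = 0 ∧ (i : ℕ) ≠ 0}

theorem mem_valleys {i : Fin n} : i ∈ valleys n ↔ (i : ℕ) % 2 = 0 ∧ (i : ℕ) ≠ 0 := by
  simp [valleys]

theorem card_valleys (n : ℕ) : #(valleys n) = (n - 1) / 2 := by
  rw [← card_range ((n - 1) / 2)]
  refine card_bij (fun i _ => (i : ℕ) / 2 - 1) ?_ ?_ ?_
  · intro i hi
    rw [mem_valleys] at hi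
    rw [mem_range]
    omega
  · intro i hi j hj hij
    rw [mem_valleys] at hi hj
    omega
  · intro k hk
    rw [mem_range] at hk
    exact ⟨⟨2 * k + 2, by omega⟩, mem_valleys.mpr (by dsimp; omega), by dsimp; omega⟩

theorem exists_peak_of_mem_valleys {i : Fin n} (hi : i ∈ valleys n) :
    ∃ p ∉ valleys n, (i : ℕ) = p + 1 := by
  rw [mem_valleys] at hi
  refine ⟨⟨i - 1, by omega⟩, ?_, ?_⟩
  · rw [mem_valleys]
    dsimp
    omega
  · dsimp
    omega

/-- The valleys of `w`, below the remaining entries, form a standard (skew) tableau with two rows: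
both rows increase, and each valley is smaller than the peak on its left. -/
structure IsTwoRowTableau (w : Equiv.Perm (Fin n)) : Prop where
  strictMonoOn_valleys : StrictMonoOn w (valleys n)
  strictMonoOn_compl : StrictMonoOn w (valleys n : Set (Fin n))ᶜ
  valley_lt_peak : ∀ i j : Fin n, (j : ℕ) = i + 1 → j ∈ valleys n → w j < w i

variable {w : Equiv.Perm (Fin n)}

theorem UpDown.succ_lt_of_odd (hw : UpDown w) {i j : Fin n} (hij : (j : ℕ) = i + 1)
    (hi : (i : ℕ) % 2 = 1) : w j < w i := by
  obtain ⟨j, hj⟩ := j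
  obtain rfl : j = i + 1 := hij
  simpa [hi] using hw i hj

theorem lt_of_occ321_eq_empty (h : occ321 w = ∅) {i j k : Fin n} (hij : i < j) (hjk : j < k)
    (hw : w k < w j) : w i < w j := by
  by_contra hji
  have hne : w i ≠ w j := w.injective.ne hij.ne
  exact Set.eq_empty_iff_forall_notMem.mp h (i, j, k) ⟨hij, hjk, hw, by order⟩

namespace IsTwoRowTableau

theorem of_upDown {m : Fin n} (hm : (m : ℕ) + 1 = n) (hw : UpDown w) (h321 : occ321 w = ∅)
    (hlast : w m = m) : IsTwoRowTableau w where
  strictMonoOn_valleys i hi j _ hij := by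
    obtain ⟨p, -, hip⟩ := exists_peak_of_mem_valleys hi
    have hwp : w i < w p := hw.succ_lt_of_odd hip (by grind [mem_valleys])
    by_contra hji
    have hne : w i ≠ w j := w.injective.ne hij.ne
    exact hwp.not_gt (lt_of_occ321_eq_empty h321 (Fin.lt_def.mpr (by omega)) hij (by order))
  strictMonoOn_compl i _ j hj hij := by
    by_cases hjm : j = m
    · have hne : w i ≠ w j := w.injective.ne hij.ne
      rw [hjm, hlast] at hne ⊢
      omega
    · have hj' : (j : ℕ) + 1 < n := by omega
      have hdown : w ⟨j + 1, hj'⟩ < w j := hw.succ_lt_of_odd rfl (by grind [mem_valleys])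
      exact lt_of_occ321_eq_empty h321 hij (Fin.lt_def.mpr (Nat.lt_succ_self j)) hdown
  valley_lt_peak i j hij hj := hw.succ_lt_of_odd hij (by grind [mem_valleys])

theorem inversion_mem_valleys (hw : IsTwoRowTableau w) {i j : Fin n} (hij : i < j)
    (hji : w j < w i) : i ∉ valleys n ∧ j ∈ valleys n := by
  by_cases hi : i ∈ valleys n <;> by_cases hj : j ∈ valleys n
  · exact absurd (hw.strictMonoOn_valleys hi hj hij) hji.not_gt
  · obtain ⟨p, hp, hip⟩ := exists_peak_of_mem_valleys hi
    have hwp : w i < w p := hw.valley_lt_peak p i hip hi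
    have hpj : w p < w j := hw.strictMonoOn_compl hp hj (by omega)
    exact absurd (hwp.trans hpj) hji.not_gt
  · exact ⟨hi, hj⟩
  · exact absurd (hw.strictMonoOn_compl hi hj hij) hji.not_gt

theorem occ321_eq_empty (hw : IsTwoRowTableau w) : occ321 w = ∅ :=
  Set.eq_empty_iff_forall_notMem.mpr fun _ ⟨hij, hjk, hkj, hji⟩ =>
    (hw.inversion_mem_valleys hjk hkj).1 (hw.inversion_mem_valleys hij hji).2

theorem lt_of_notMem_valleys (hw : IsTwoRowTableau w) {i j : Fin n} (hij : i < j)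
    (hj : j ∉ valleys n) : w i < w j := by
  by_contra hji
  have hne : w i ≠ w j := w.injective.ne hij.ne
  exact hj (hw.inversion_mem_valleys hij (by order)).2

theorem upDown (hw : IsTwoRowTableau w) : UpDown w := by
  intro i hi
  split_ifs with hpar
  · exact hw.lt_of_notMem_valleys (Fin.lt_def.mpr (by simp))
      (by rw [mem_valleys]; dsimp; omega)
  · exact hw.valley_lt_peak _ _ rfl (by rw [mem_valleys]; dsimp; omega)

theorem apply_last (hw : IsTwoRowTableau w) (hn : n % 2 = 0) {m : Fin n} (hm : (m : ℕ) + 1 = n) :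
    w m = m := by
  rw [← Equiv.eq_symm_apply]
  by_contra hne
  have hlt : w (w.symm m) < w m :=
    hw.lt_of_notMem_valleys (by omega) (by rw [mem_valleys]; omega)
  rw [Equiv.apply_symm_apply] at hlt
  omega

end IsTwoRowTableau

theorem upDown_and_occ321_eq_empty_and_apply_last_iff (hn : n % 2 = 0) {m : Fin n}
    (hm : (m : ℕ) + 1 = n) : UpDown w ∧ occ321 w = ∅ ∧ w m = m ↔ IsTwoRowTableau w :=
  ⟨fun ⟨hud, h321, hlast⟩ => .of_upDown hm hud h321 hlast,
    fun hw => ⟨hw.upDown, hw.occ321_eq_empty, hw.apply_last hn hm⟩⟩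

end Tableau

section UpValues

variable {n : ℕ} {w : Equiv.Perm (Fin n)}

/-- The positions of the up-steps in the word of `w`: the values in the valleys, shifted by one to
make room for an additional up-step at the start. -/
def upValues (w : Equiv.Perm (Fin n)) : Finset ℕ :=
  insert 0 ((valleys n).image fun i => (w i : ℕ) + 1)

theorem succ_mem_upValues_iff {x : Fin n} : (x : ℕ) + 1 ∈ upValues w ↔ w.symm x ∈ valleys n := by
  simp [upValues, ← Fin.ext_iff, ← Equiv.eq_symm_apply]

theorem count_mem_upValues_succ (t : ℕ) :
    Nat.count (· ∈ upValues w) (t + 1) = #{i ∈ valleys n | w i < t} + 1 := by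
  have hinj : Function.Injective fun i => (w i : ℕ) := Fin.val_injective.comp w.injective
  have hzero : 0 ∈ upValues w := mem_insert_self _ _
  rw [Nat.count_succ', if_pos hzero, Nat.count_eq_card_filter_range,
    ← card_image_of_injective _ hinj]
  congr 2
  ext x
  simp only [upValues, mem_filter, mem_range, mem_insert, mem_image]
  grind

theorem count_notMem_upValues_succ {t : ℕ} (ht : t ≤ n) :
    Nat.count (· ∉ upValues w) (t + 1) = #{i ∈ (valleys n)ᶜ | w i < t} := by
  have htotal : #{i : Fin n | w i < t} = t := by
    rw [card_equiv w (t := {x : Fin n | x < t}) (by simp), Fin.card_filter_val_lt, min_eq_right ht]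
  have hsplit : #{i ∈ valleys n | w i < t} + #{i ∈ (valleys n)ᶜ | w i < t} = t := by
    rw [← card_union_of_disjoint (disjoint_filter_filter disjoint_compl_right), ← filter_union,
      union_compl, htotal]
  have hcount := count_add_count_not (· ∈ upValues w) (t + 1)
  rw [count_mem_upValues_succ] at hcount
  omega

theorem IsTwoRowTableau.card_peaks_lt_le_card_valleys_lt_add_one {l t : ℕ}
    {w : Equiv.Perm (Fin (2 * l))} (hw : IsTwoRowTableau w) (ht : t < 2 * l) :
    #{i ∈ (valleys (2 * l))ᶜ | w i < t} ≤ #{i ∈ valleys (2 * l) | w i < t} + 1 := by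
  let pred (i : Fin (2 * l)) : Fin (2 * l) := ⟨i - 1, by omega⟩
  have hsub : ({i ∈ (valleys (2 * l))ᶜ | w i < t} : Finset _) ⊆
      insert ⟨0, by omega⟩ ({i ∈ valleys (2 * l) | w i < t}.image pred) := by
    intro i hi
    rw [mem_filter, mem_compl, mem_valleys] at hi
    rw [mem_insert, mem_image]
    by_cases hi0 : (i : ℕ) = 0
    · exact .inl (Fin.ext hi0)
    · have hilast : (i : ℕ) + 1 ≠ 2 * l := fun h => by
        have hwi : w i = i := hw.apply_last (by omega) h
        omega
      let j : Fin (2 * l) := ⟨i + 1, by omega⟩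
      have hj : j ∈ valleys (2 * l) := by
        rw [mem_valleys]
        dsimp only [j]
        omega
      have hji : w j < w i := hw.valley_lt_peak i j rfl hj
      exact .inr ⟨j, mem_filter.mpr ⟨hj, by omega⟩, rfl⟩
  exact (card_le_card hsub).trans <| (card_insert_le _ _).trans <|
    Nat.add_le_add_right card_image_le 1

theorem IsTwoRowTableau.succ_lt_of_mem_valleys (hw : IsTwoRowTableau w) {i : Fin n}
    (hi : i ∈ valleys n) : (w i : ℕ) + 1 < n := by
  obtain ⟨p, -, hip⟩ := exists_peak_of_mem_valleys hi
  have hwp : w i < w p := hw.valley_lt_peak p i hip hi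
  omega

theorem IsTwoRowTableau.isBallotSet_upValues {l : ℕ} {w : Equiv.Perm (Fin (2 * l))}
    (hl : 0 < l) (hw : IsTwoRowTableau w) : IsBallotSet l (upValues w) where
  subset_range := by
    intro x hx
    obtain rfl | ⟨i, hi, rfl⟩ : x = 0 ∨ ∃ i ∈ valleys (2 * l), (w i : ℕ) + 1 = x := by
      simpa [upValues] using hx
    · exact mem_range.mpr (by omega)
    · exact mem_range.mpr (hw.succ_lt_of_mem_valleys hi)
  count_mem_eq := by
    have hall : ∀ i ∈ valleys (2 * l), (w i : ℕ) < 2 * l - 1 := fun i hi =>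
      Nat.lt_sub_of_add_lt (hw.succ_lt_of_mem_valleys hi)
    have hcount := count_mem_upValues_succ (w := w) (2 * l - 1)
    rw [Nat.sub_add_cancel (by omega), filter_true_of_mem hall, card_valleys] at hcount
    omega
  count_notMem_le_count_mem i hi := by
    rcases i with _ | t
    · rfl
    · rw [count_mem_upValues_succ, count_notMem_upValues_succ (by omega)]
      exact hw.card_peaks_lt_le_card_valleys_lt_add_one (by omega)

theorem injOn_upValues : Set.InjOn upValues {w : Equiv.Perm (Fin n) | IsTwoRowTableau w} := by
  intro w hw w' hw' h
  have hvalleys : w '' valleys n = w' '' valleys n := by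
    ext x
    rw [Equiv.image_eq_preimage_symm, Equiv.image_eq_preimage_symm, Set.mem_preimage,
      Set.mem_preimage, mem_coe, mem_coe, ← succ_mem_upValues_iff, ← succ_mem_upValues_iff, h]
  have hcompl : w '' (valleys n : Set (Fin n))ᶜ = w' '' (valleys n : Set (Fin n))ᶜ := by
    rw [Set.image_compl_eq w.bijective, Set.image_compl_eq w'.bijective, hvalleys]
  ext i : 1
  by_cases hi : i ∈ valleys n
  · exact eqOn_of_strictMonoOn_of_image_eq hw.strictMonoOn_valleys hw'.strictMonoOn_valleys
      hvalleys hi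
  · exact eqOn_of_strictMonoOn_of_image_eq hw.strictMonoOn_compl hw'.strictMonoOn_compl hcompl hi

end UpValues

section OfBallotSet

/-- The position in the permutation encoded by `S` of the value `y - 1`, for `0 < y`. The truncated
subtraction puts the down-step number `0` into position `0` instead of `-1`. -/
def position (S : Finset ℕ) (y : ℕ) : ℕ :=
  if y ∈ S then 2 * Nat.count (· ∈ S) y else 2 * Nat.count (· ∉ S) y - 1

variable {n : ℕ} {S : Finset ℕ}

theorem position_of_mem {y : ℕ} (hy : y ∈ S) : position S y = 2 * Nat.count (· ∈ S) y :=
  if_pos hy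

theorem position_of_notMem {y : ℕ} (hy : y ∉ S) : position S y = 2 * Nat.count (· ∉ S) y - 1 :=
  if_neg hy

theorem strictMonoOn_position : StrictMonoOn (position S) S := by
  intro y hy z hz hyz
  have hcount := Nat.count_strict_mono (p := (· ∈ S)) hy hyz
  rw [position_of_mem hy, position_of_mem hz]
  omega

theorem strictMonoOn_position_compl : StrictMonoOn (position S) (S : Set ℕ)ᶜ := by
  intro y hy z hz hyz
  have hcount := Nat.count_strict_mono (p := (· ∉ S)) hy hyz
  rw [position_of_notMem hy, position_of_notMem hz]
  omega

namespace IsBallotSet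

theorem zero_mem (hS : IsBallotSet n S) (hn : 0 < n) : 0 ∈ S := by
  have hballot := hS.count_notMem_le_count_mem 1 (by omega)
  grind

theorem count_mem_pos (hS : IsBallotSet n S) {y : ℕ} (hn : 0 < n) (hy : 0 < y) :
    0 < Nat.count (· ∈ S) y :=
  (Nat.zero_le _).trans_lt (Nat.count_strict_mono (hS.zero_mem hn) hy)

theorem even_position_and_ne_zero_iff (hS : IsBallotSet n S) {y : ℕ} (hn : 0 < n)
    (hy : 0 < y) : position S y % 2 = 0 ∧ position S y ≠ 0 ↔ y ∈ S := by
  have hpos := hS.count_mem_pos hn hy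
  by_cases h : y ∈ S
  · simp only [position_of_mem h, h, iff_true]
    omega
  · simp only [position_of_notMem h, h, iff_false]
    omega

theorem position_lt (hS : IsBallotSet n S) {y : ℕ} (hn : 0 < n) (hy : y ≤ 2 * n) :
    position S y < 2 * n := by
  have hmem := hS.count_mem_eq
  have htotal := count_add_count_not (· ∈ S) (2 * n)
  by_cases h : y ∈ S
  · have hcount := Nat.count_strict_mono (p := (· ∈ S)) h (mem_range.mp (hS.subset_range h))
    rw [position_of_mem h]
    omega
  · have hcount := Nat.count_monotone (· ∉ S) hy
    rw [position_of_notMem h]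
    omega

theorem injOn_position (hS : IsBallotSet n S) (hn : 0 < n) :
    Set.InjOn (position S) (Set.Ioi 0) := by
  intro y hy z hz hyz
  have hclass : y ∈ S ↔ z ∈ S := by
    rw [← hS.even_position_and_ne_zero_iff hn hy, hyz,
      hS.even_position_and_ne_zero_iff hn hz]
  by_cases h : y ∈ S
  · exact strictMonoOn_position.injOn h (hclass.mp h) hyz
  · exact strictMonoOn_position_compl.injOn h (mt hclass.mpr h) hyz

theorem lt_of_position_eq_add_one (hS : IsBallotSet n S) {y z : ℕ} (hy : y ∉ S) (hz : z ∈ S)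
    (h : position S z = position S y + 1) : z < y := by
  by_contra! hyz
  have hzn : z < 2 * n := mem_range.mp (hS.subset_range hz)
  have hyz' : y < z := hyz.lt_of_ne (ne_of_mem_of_not_mem hz hy).symm
  have hballot := hS.count_notMem_le_count_mem (y + 1) (by omega)
  have hdown : Nat.count (· ∉ S) (y + 1) = Nat.count (· ∉ S) y + 1 :=
    Nat.count_succ_eq_succ_count_iff.mpr hy
  have hup : Nat.count (· ∈ S) (y + 1) = Nat.count (· ∈ S) y :=
    Nat.count_succ_eq_count_iff.mpr hy
  have hmono : Nat.count (· ∈ S) y ≤ Nat.count (· ∈ S) z := Nat.count_monotone _ hyz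
  rw [position_of_mem hz, position_of_notMem hy] at h
  omega

/-- The permutation in which the value `x` has the position prescribed by the ballot set `S`. -/
noncomputable def toPerm (hS : IsBallotSet n S) (hn : 0 < n) : Equiv.Perm (Fin (2 * n)) :=
  (Equiv.ofBijective
    (fun x : Fin (2 * n) => (⟨position S (x + 1), hS.position_lt hn x.isLt⟩ : Fin (2 * n))) <|
    Finite.injective_iff_bijective.mp fun x y hxy => Fin.ext <| Nat.succ_injective <|
      hS.injOn_position hn x.succ_pos y.succ_pos (Fin.ext_iff.mp hxy)).symm

variable (hS : IsBallotSet n S) (hn : 0 < n)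

theorem val_toPerm_symm (x : Fin (2 * n)) :
    ((hS.toPerm hn).symm x : ℕ) = position S (x + 1) :=
  rfl

theorem position_toPerm (i : Fin (2 * n)) : position S (hS.toPerm hn i + 1) = i := by
  rw [← val_toPerm_symm hS hn, Equiv.symm_apply_apply]

theorem toPerm_succ_mem_iff (i : Fin (2 * n)) :
    (hS.toPerm hn i : ℕ) + 1 ∈ S ↔ i ∈ valleys (2 * n) := by
  rw [← hS.even_position_and_ne_zero_iff hn (Nat.succ_pos _), position_toPerm,
    mem_valleys]

theorem isTwoRowTableau_toPerm : IsTwoRowTableau (hS.toPerm hn) where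
  strictMonoOn_valleys i hi j hj hij := by
    rw [mem_coe, ← hS.toPerm_succ_mem_iff hn] at hi hj
    refine Fin.lt_def.mpr (Nat.succ_lt_succ_iff.mp ((strictMonoOn_position.lt_iff_lt hi hj).mp ?_))
    rwa [position_toPerm, position_toPerm]
  strictMonoOn_compl i hi j hj hij := by
    rw [Set.mem_compl_iff, mem_coe, ← hS.toPerm_succ_mem_iff hn] at hi hj
    refine Fin.lt_def.mpr
      (Nat.succ_lt_succ_iff.mp ((strictMonoOn_position_compl.lt_iff_lt hi hj).mp ?_))
    rwa [position_toPerm, position_toPerm]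
  valley_lt_peak i j hij hj := by
    have hi : i ∉ valleys (2 * n) := by grind [mem_valleys]
    rw [← hS.toPerm_succ_mem_iff hn] at hi hj
    have hpos : position S (hS.toPerm hn j + 1) = position S (hS.toPerm hn i + 1) + 1 := by
      rwa [position_toPerm, position_toPerm]
    exact Fin.lt_def.mpr (Nat.succ_lt_succ_iff.mp (hS.lt_of_position_eq_add_one hi hj hpos))

theorem upValues_toPerm : upValues (hS.toPerm hn) = S := by
  have hup := ((hS.isTwoRowTableau_toPerm hn).isBallotSet_upValues hn).subset_range
  ext y
  rcases y with _ | x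
  · simp [upValues, hS.zero_mem hn]
  by_cases hx : x < 2 * n
  · rw [succ_mem_upValues_iff (x := ⟨x, hx⟩), ← toPerm_succ_mem_iff hS hn, Equiv.apply_symm_apply]
  · have hx' : x + 1 ∉ range (2 * n) := by rw [mem_range]; omega
    exact iff_of_false (mt (@hup _) hx') (mt (@hS.subset_range _) hx')

end IsBallotSet

end OfBallotSet

theorem bijOn_upValues {l : ℕ} (hl : 0 < l) :
    Set.BijOn upValues {w : Equiv.Perm (Fin (2 * l)) | IsTwoRowTableau w} {S | IsBallotSet l S} :=
  ⟨fun _ hw => hw.isBallotSet_upValues hl, injOn_upValues,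
    fun _ hS => ⟨hS.toPerm hl, hS.isTwoRowTableau_toPerm hl, hS.upValues_toPerm hl⟩⟩

theorem stmt7 (l : ℕ) (hl : 2 ≤ l) :
    Nat.card {w : Equiv.Perm (Fin (2 * l)) // UpDown w ∧ occ321 w = ∅ ∧
        w ⟨2 * l - 1, by omega⟩ = ⟨2 * l - 1, by omega⟩} = catalan l := by
  have hl' : 0 < l := by omega
  calc
    _ = Nat.card {w : Equiv.Perm (Fin (2 * l)) // IsTwoRowTableau w} :=
      Nat.card_congr (Equiv.subtypeEquivRight fun w =>
        upDown_and_occ321_eq_empty_and_apply_last_iff (by omega) (by dsimp; omega))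
    _ = Nat.card {S // IsBallotSet l S} := Nat.card_congr (bijOn_upValues hl').equiv
    _ = catalan l := card_isBallotSet l
end
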